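/- For any positive integers a and k, the centralizer of the word a^k (a repeated k times) equals the centralizer of the single-letter word a: C(a^k) = C(a). -/

import Mathlib

namespace Plactic

/-- Insert `x` into a weakly increasing row, returning the new row and the bumped entry. -/
def rowInsert (x : ℕ) : List ℕ → List ℕ × Option ℕ
  | [] => ([x], none)
  | y :: ys =>
    if x < y then (x :: ys, some y)
    else
      let p := rowInsert x ys
      (y :: p.1, p.2)

/-- RSK insertion of `x` into a tableau given as a list of rows. -/
def tInsert (x : ℕ) : List (List ℕ) → List (List ℕ)
  | [] => [[x]]
  | r :: rs =>
    match rowInsert x r with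
    | (r', none) => r' :: rs
    | (r', some y) => r' :: tInsert y rs

/-- The RSK insertion tableau of a word. -/
def P (w : List ℕ) : List (List ℕ) := w.foldl (fun t x => tInsert x t) []

/-- The `i`-th row (0-indexed) of the insertion tableau of `w`. -/
def row (w : List ℕ) (i : ℕ) : List ℕ := (P w).getD i []

/-- The `j`-th column (0-indexed) of a tableau, read top to bottom. -/
def col (T : List (List ℕ)) (j : ℕ) : List ℕ := T.filterMap (fun r => r[j]?)

/-- An elementary Knuth transposition. -/
inductive KStep : List ℕ → List ℕ → Prop
  | k1 (x y : List ℕ) (a b c : ℕ) : a ≤ b → b < c →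
      KStep (x ++ [a, c, b] ++ y) (x ++ [c, a, b] ++ y)
  | k2 (x y : List ℕ) (a b c : ℕ) : a < b → b ≤ c →
      KStep (x ++ [b, a, c] ++ y) (x ++ [b, c, a] ++ y)

/-- Knuth equivalence: the equivalence relation generated by Knuth transpositions. -/
def KEquiv : List ℕ → List ℕ → Prop := Relation.EqvGen KStep

/-- The centralizer of `u` in the plactic monoid. -/
def Cent (u : List ℕ) : Set (List ℕ) := {w | KEquiv (u ++ w) (w ++ u)}

end Plactic

namespace Plactic

theorem KEquiv.append_left {u v : List ℕ} (h : KEquiv u v) (s : List ℕ) :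
    KEquiv (s ++ u) (s ++ v) := by
  induction h with
  | rel u v h =>
    refine Relation.EqvGen.rel _ _ ?_
    cases h with
    | k1 x y a b c hab hbc => simpa using KStep.k1 (s ++ x) y a b c hab hbc
    | k2 x y a b c hab hbc => simpa using KStep.k2 (s ++ x) y a b c hab hbc
  | refl u => exact Relation.EqvGen.refl _
  | symm u v _ ih => exact Relation.EqvGen.symm _ _ ih
  | trans u v w _ _ ih₁ ih₂ => exact Relation.EqvGen.trans _ _ _ ih₁ ih₂

theorem KEquiv.append_right {u v : List ℕ} (h : KEquiv u v) (s : List ℕ) :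
    KEquiv (u ++ s) (v ++ s) := by
  induction h with
  | rel u v h =>
    refine Relation.EqvGen.rel _ _ ?_
    cases h with
    | k1 x y a b c hab hbc => simpa using KStep.k1 x (y ++ s) a b c hab hbc
    | k2 x y a b c hab hbc => simpa using KStep.k2 x (y ++ s) a b c hab hbc
  | refl u => exact Relation.EqvGen.refl _
  | symm u v _ ih => exact Relation.EqvGen.symm _ _ ih
  | trans u v w _ _ ih₁ ih₂ => exact Relation.EqvGen.trans _ _ _ ih₁ ih₂

theorem KEquiv.refl (u : List ℕ) : KEquiv u u := Relation.EqvGen.refl u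

theorem KEquiv.symm {u v : List ℕ} (h : KEquiv u v) : KEquiv v u :=
  Relation.EqvGen.symm _ _ h

theorem KEquiv.trans {u v w : List ℕ} (h₁ : KEquiv u v) (h₂ : KEquiv v w) : KEquiv u w :=
  Relation.EqvGen.trans _ _ _ h₁ h₂

/-- Every weakly increasing subword of `u` is matched by one of `v` of the same length whose
entries obey the same bounds. -/
def IncDominated (u v : List ℕ) : Prop :=
  ∀ s : List ℕ, s.Sublist u → s.Pairwise (· ≤ ·) → ∃ t : List ℕ, t.Sublist v ∧ t.Pairwise (· ≤ ·) ∧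
    t.length = s.length ∧ (∀ b, (∀ z ∈ s, b ≤ z) → ∀ z ∈ t, b ≤ z) ∧
    (∀ b, (∀ z ∈ s, z ≤ b) → ∀ z ∈ t, z ≤ b)

theorem IncDominated.append {u v : List ℕ} (h : IncDominated u v) (x y : List ℕ) :
    IncDominated (x ++ u ++ y) (x ++ v ++ y) := by
  intro s hs hsort
  obtain ⟨s', s₃, rfl, hs', h₃⟩ := List.sublist_append_iff.1 hs
  obtain ⟨s₁, s₂, rfl, h₁, h₂⟩ := List.sublist_append_iff.1 hs'
  simp only [List.pairwise_append, List.mem_append] at hsort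
  obtain ⟨⟨p₁, p₂, p₁₂⟩, p₃, p₁₃⟩ := hsort
  obtain ⟨t, ht, hts, hl, hlo, hhi⟩ := h s₂ h₂ p₂
  refine ⟨s₁ ++ t ++ s₃, (h₁.append ht).append h₃, ?_, by simp [hl], ?_, ?_⟩
  · simp only [List.pairwise_append, List.mem_append]
    refine ⟨⟨p₁, hts, fun i hi => hlo i (p₁₂ i hi)⟩, p₃, ?_⟩
    rintro i (hi | hi) j hj
    · exact p₁₃ i (Or.inl hi) j hj
    · exact hhi j (fun z hz => p₁₃ z (Or.inr hz) j hj) i hi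
  · simp only [List.mem_append]
    rintro b hb z ((hz | hz) | hz)
    · exact hb z (by simp [hz])
    · exact hlo b (fun z hz => hb z (by simp [hz])) z hz
    · exact hb z (by simp [hz])
  · simp only [List.mem_append]
    rintro b hb z ((hz | hz) | hz)
    · exact hb z (by simp [hz])
    · exact hhi b (fun z hz => hb z (by simp [hz])) z hz
    · exact hb z (by simp [hz])

theorem incDominated_of_replace {u v s₀ t₀ : List ℕ}
    (h : ∀ s : List ℕ, s.Sublist u → s.Pairwise (· ≤ ·) → s.Sublist v ∨ s = s₀)
    (ht : t₀.Sublist v) (hts : t₀.Pairwise (· ≤ ·)) (hl : t₀.length = s₀.length)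
    (hlo : ∀ b, (∀ z ∈ s₀, b ≤ z) → ∀ z ∈ t₀, b ≤ z)
    (hhi : ∀ b, (∀ z ∈ s₀, z ≤ b) → ∀ z ∈ t₀, z ≤ b) : IncDominated u v := by
  intro s hs hsort
  rcases h s hs hsort with h | rfl
  · exact ⟨s, h, hsort, rfl, fun _ h => h, fun _ h => h⟩
  · exact ⟨t₀, ht, hts, hl, hlo, hhi⟩

theorem sublist_triple {s : List ℕ} {p q r : ℕ} (h : s.Sublist [p, q, r]) :
    s = [] ∨ s = [p] ∨ s = [q] ∨ s = [r] ∨ s = [p, q] ∨ s = [p, r] ∨ s = [q, r] ∨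
      s = [p, q, r] := by
  have := List.mem_sublists.2 h
  simp [List.sublists, List.foldr] at this
  tauto

theorem KStep.incDominated {u v : List ℕ} (h : KStep u v) :
    IncDominated u v ∧ IncDominated v u := by
  cases h with
  | k1 x y a b c hab hbc =>
    constructor <;> refine IncDominated.append ?_ x y <;>
    refine incDominated_of_replace (s₀ := [a, c]) (t₀ := [a, b]) ?_ ?_ (by simpa) rfl ?_ ?_
    · intro s hs hsort
      rcases sublist_triple hs with rfl | rfl | rfl | rfl | rfl | rfl | rfl | rfl <;>
        (simp at hsort ⊢; try omega)
    · exact (List.Sublist.refl [a, b]).cons c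
    · simp; omega
    · simp; omega
    · intro s hs hsort
      rcases sublist_triple hs with rfl | rfl | rfl | rfl | rfl | rfl | rfl | rfl <;>
        (simp at hsort ⊢; try omega)
    · exact ((List.Sublist.refl [b]).cons c).cons_cons a
    · simp; omega
    · simp; omega
  | k2 x y a b c hab hbc =>
    constructor <;> refine IncDominated.append ?_ x y <;>
    refine incDominated_of_replace (s₀ := [a, c]) (t₀ := [b, c]) ?_ ?_ (by simpa) rfl ?_ ?_
    · intro s hs hsort
      rcases sublist_triple hs with rfl | rfl | rfl | rfl | rfl | rfl | rfl | rfl <;>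
        (simp at hsort ⊢; try omega)
    · simp
    · simp; omega
    · simp; omega
    · intro s hs hsort
      rcases sublist_triple hs with rfl | rfl | rfl | rfl | rfl | rfl | rfl | rfl <;>
        (simp at hsort ⊢; try omega)
    · simp
    · simp; omega
    · simp; omega

theorem IncDominated.trans {u v w : List ℕ} (h₁ : IncDominated u v) (h₂ : IncDominated v w) :
    IncDominated u w := by
  intro s hs hsort
  obtain ⟨t, ht, hts, hl, hlo, hhi⟩ := h₁ s hs hsort
  obtain ⟨r, hr, hrs, hl', hlo', hhi'⟩ := h₂ t ht hts
  exact ⟨r, hr, hrs, hl'.trans hl, fun b h => hlo' b (hlo b h), fun b h => hhi' b (hhi b h)⟩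

theorem KEquiv.incDominated {u v : List ℕ} (h : KEquiv u v) :
    IncDominated u v ∧ IncDominated v u := by
  induction h with
  | rel u v h => exact h.incDominated
  | refl u =>
    exact ⟨fun s hs h => ⟨s, hs, h, rfl, fun _ h => h, fun _ h => h⟩,
      fun s hs h => ⟨s, hs, h, rfl, fun _ h => h, fun _ h => h⟩⟩
  | symm u v _ ih => exact ih.symm
  | trans u v w _ _ ih₁ ih₂ => exact ⟨ih₁.1.trans ih₂.1, ih₂.2.trans ih₁.2⟩

theorem length_le_count_of_forall_eq {a : ℕ} {s w : List ℕ} (hs : s.Sublist w)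
    (h : ∀ z ∈ s, z = a) : s.length ≤ w.count a := by
  have : s.count a = s.length := List.count_eq_length.2 fun z hz => (h z hz).symm
  exact this ▸ hs.count_le a

theorem length_le_count_of_ge {a k : ℕ} (hk : 0 < k) {w : List ℕ}
    (h : KEquiv (List.replicate k a ++ w) (w ++ List.replicate k a)) (s : List ℕ)
    (hs : s.Sublist w) (hsort : s.Pairwise (· ≤ ·)) (hge : ∀ z ∈ s, a ≤ z) :
    s.length ≤ w.count a := by
  obtain ⟨t, ht, hts, hl, hlo, -⟩ := h.incDominated.1 (List.replicate k a ++ s)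
    (hs.append_left _) (by simp [List.pairwise_append, hsort]; tauto)
  have hta := hlo a (by simp; grind)
  obtain ⟨t₁, t₂, rfl, h₁, h₂⟩ := List.sublist_append_iff.1 ht
  have hlen := h₁.length_le
  have hlen₂ := h₂.length_le
  simp only [List.length_append, List.length_replicate] at hl hlen₂
  rw [List.pairwise_append] at hts
  rcases t₂ with _ | ⟨y, t₂⟩
  · rw [List.length_nil] at hl
    have hdecr : w.length - t₁.length < w.length - s.length := by omega
    have := length_le_count_of_ge hk h t₁ h₁ hts.1 (fun z hz => hta z (by simp [hz]))
    omega
  · have hy : y = a := List.eq_of_mem_replicate (h₂.subset (by simp))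
    have := length_le_count_of_forall_eq (a := a) h₁ (fun z hz =>
      le_antisymm (hy ▸ hts.2.2 z hz y (by simp)) (hta z (by simp [hz])))
    omega
termination_by w.length - s.length

theorem length_le_count_of_le {a k : ℕ} (hk : 0 < k) {w : List ℕ}
    (h : KEquiv (List.replicate k a ++ w) (w ++ List.replicate k a)) (s : List ℕ)
    (hs : s.Sublist w) (hsort : s.Pairwise (· ≤ ·)) (hle : ∀ z ∈ s, z ≤ a) :
    s.length ≤ w.count a := by
  obtain ⟨t, ht, hts, hl, -, hhi⟩ := h.incDominated.2 (s ++ List.replicate k a)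
    (hs.append_right _) (by simp [List.pairwise_append, hsort]; tauto)
  have hta := hhi a (by simp; grind)
  obtain ⟨t₂, t₁, rfl, h₂, h₁⟩ := List.sublist_append_iff.1 ht
  have hlen := h₁.length_le
  have hlen₂ := h₂.length_le
  simp only [List.length_append, List.length_replicate] at hl hlen₂
  rw [List.pairwise_append] at hts
  rcases t₂ with _ | ⟨y, t₂⟩
  · rw [List.length_nil] at hl
    have hdecr : w.length - t₁.length < w.length - s.length := by omega
    have := length_le_count_of_le hk h t₁ h₁ hts.2.1 (fun z hz => hta z (by simp [hz]))
    omega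
  · have hy : y = a := List.eq_of_mem_replicate (h₂.subset (by simp))
    have := length_le_count_of_forall_eq (a := a) h₁ (fun z hz =>
      le_antisymm (hta z (by simp [hz])) (hy ▸ hts.2.2 y (by simp) z hz))
    omega
termination_by w.length - s.length

theorem exists_append_of_pairwise_le (a : ℕ) {s : List ℕ} (hs : s.Pairwise (· ≤ ·)) :
    ∃ x y, s = x ++ y ∧ (∀ z ∈ x, z < a) ∧ ∀ z ∈ y, a ≤ z := by
  induction s with
  | nil => exact ⟨[], [], by simp⟩
  | cons b s ih =>
    rw [List.pairwise_cons] at hs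
    by_cases hb : b < a
    · obtain ⟨x, y, rfl, hx, hy⟩ := ih hs.2
      exact ⟨b :: x, y, rfl, by simpa [hb] using hx, hy⟩
    · exact ⟨[], b :: s, rfl, by simp, by grind⟩

theorem replicate_count_sublist (a : ℕ) (w : List ℕ) :
    (List.replicate (w.count a) a).Sublist w :=
  List.replicate_sublist_iff.2 le_rfl

/-- If weakly increasing subwords with all entries `≤ a`, and those with all entries `≥ a`, have
at most as many letters as there are `a`s, then so do all weakly increasing subwords. -/
theorem length_le_count {a : ℕ} {w : List ℕ}
    (hge : ∀ s : List ℕ, s.Sublist w → s.Pairwise (· ≤ ·) → (∀ z ∈ s, a ≤ z) → s.length ≤ w.count a)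
    (hle : ∀ s : List ℕ, s.Sublist w → s.Pairwise (· ≤ ·) → (∀ z ∈ s, z ≤ a) → s.length ≤ w.count a)
    {s : List ℕ} (hs : s.Sublist w) (hsort : s.Pairwise (· ≤ ·)) : s.length ≤ w.count a := by
  obtain ⟨x, s', rfl, hx, hs'⟩ := exists_append_of_pairwise_le a hsort
  rw [List.pairwise_append] at hsort
  obtain ⟨y, z, rfl, hy, hz⟩ := exists_append_of_pairwise_le (a + 1) hsort.2.1
  obtain ⟨w₁, w', rfl, h₁, h'⟩ := List.append_sublist_iff.1 hs
  obtain ⟨w₂, w₃, rfl, h₂, h₃⟩ := List.append_sublist_iff.1 h'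
  have hy' := length_le_count_of_forall_eq (a := a) h₂ fun i hi =>
    le_antisymm (Nat.lt_succ_iff.1 (hy i hi)) (hs' i (by simp [hi]))
  have hx' := hle (x ++ List.replicate ((w₂ ++ w₃).count a) a)
    (h₁.append (replicate_count_sublist _ _))
    (List.pairwise_append.2 ⟨hsort.1, by simp, fun i hi j hj =>
      List.eq_of_mem_replicate hj ▸ (hx i hi).le⟩)
    (fun i hi => (List.mem_append.1 hi).elim (fun h => (hx i h).le)
      fun h => (List.eq_of_mem_replicate h).le)
  have hz' := hge (List.replicate ((w₁ ++ w₂).count a) a ++ z)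
    (by rw [← List.append_assoc]; exact (replicate_count_sublist _ _).append h₃)
    (List.pairwise_append.2 ⟨by simp, (List.pairwise_append.1 hsort.2.1).2.1, fun i hi j hj =>
      List.eq_of_mem_replicate hi ▸ (Nat.le_of_succ_le (hz j hj))⟩)
    (fun i hi => (List.mem_append.1 hi).elim (fun h => (List.eq_of_mem_replicate h).ge)
      fun h => Nat.le_of_succ_le (hz i h))
  simp only [List.length_append, List.length_replicate, List.count_append] at hx' hy' hz' ⊢
  omega

theorem kEquiv_move_right {x y : ℕ} (hxy : x ≤ y) (d : List ℕ)
    (hd : (d ++ [y]).Pairwise (· > ·)) : KEquiv (x :: (d ++ [y])) (d ++ [x, y]) := by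
  induction d with
  | nil => exact KEquiv.refl _
  | cons p d ih =>
    rw [List.cons_append, List.pairwise_cons] at hd
    refine KEquiv.trans ?_ ((ih hd.2).append_left [p])
    obtain ⟨q, r, hqr⟩ : ∃ q r, d ++ [y] = q :: r := List.exists_cons_of_ne_nil (by simp)
    have hyq : y ≤ q := by
      rcases d with _ | ⟨q', d⟩
      · simp_all
      · obtain ⟨rfl, -⟩ := List.cons_eq_cons.1 hqr
        exact (List.rel_of_pairwise_cons hd.2 (by simp)).le
    have hqp : q < p := hd.1 q (by simp [hqr])
    have h : KEquiv ([x, p, q] ++ r) ([p, x, q] ++ r) :=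
      Relation.EqvGen.rel _ _ (KStep.k1 [] r x q p (by omega) hqp)
    simpa [hqr] using h

theorem kEquiv_move_to_end {x y : ℕ} (hxy : x ≤ y) (e : List ℕ)
    (he : (x :: e).Pairwise (· > ·)) : KEquiv (x :: y :: e) (x :: (e ++ [y])) := by
  induction e generalizing x with
  | nil => exact KEquiv.refl _
  | cons p e ih =>
    rw [List.pairwise_cons] at he
    have hpx : p < x := he.1 p (by simp)
    refine KEquiv.trans (v := x :: p :: y :: e) ?_ ((ih (by omega) he.2).append_left [x])
    exact (Relation.EqvGen.rel _ _ (KStep.k2 [] e p x y hpx hxy)).symm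

theorem pairwise_gt_replace {x y : ℕ} (hxy : x ≤ y) {d e : List ℕ}
    (hc : (d ++ y :: e).Pairwise (· > ·)) (he : ∀ z ∈ e, z < x) :
    (d ++ x :: e).Pairwise (· > ·) := by
  simp only [List.pairwise_append, List.pairwise_cons, List.mem_cons] at hc ⊢
  refine ⟨hc.1, ⟨he, hc.2.1.2⟩, ?_⟩
  rintro i hi j (rfl | hj)
  · exact hxy.trans_lt (hc.2.2 i hi y (Or.inl rfl))
  · exact hc.2.2 i hi j (Or.inr hj)

/-- Bumping `y` out of a strictly decreasing word by `x`. -/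
theorem kEquiv_bump {x y : ℕ} (hxy : x ≤ y) {d e : List ℕ}
    (hc : (d ++ y :: e).Pairwise (· > ·)) (he : ∀ z ∈ e, z < x) :
    KEquiv (x :: (d ++ y :: e)) (d ++ x :: e ++ [y]) := by
  have h₁ := (kEquiv_move_right hxy d (by grind)).append_right e
  have h₂ := (kEquiv_move_to_end hxy e (by grind)).append_left d
  simp only [List.append_assoc, List.cons_append, List.nil_append] at h₁ h₂ ⊢
  exact h₁.trans h₂

theorem exists_bump (x : ℕ) {c : List ℕ} (hc : c.Pairwise (· > ·)) :
    (∀ z ∈ c, z < x) ∨ ∃ d y e, c = d ++ y :: e ∧ x ≤ y ∧ ∀ z ∈ e, z < x := by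
  induction c with
  | nil => simp
  | cons p c ih =>
    rw [List.pairwise_cons] at hc
    rcases ih hc.2 with h | ⟨d, y, e, rfl, hxy, he⟩
    · by_cases hp : p < x
      · left; simpa [hp] using h
      · exact Or.inr ⟨[], p, c, rfl, by omega, h⟩
    · exact Or.inr ⟨p :: d, y, e, rfl, hxy, he⟩

/-- The word spelled by a list of nonempty columns; each column is given by its initial segment
and its last letter. -/
def columnsWord (L : List (List ℕ × ℕ)) : List ℕ := L.flatMap fun p => p.1 ++ [p.2]

/-- Strictly decreasing columns whose last letters increase weakly. -/
def IsColumns (L : List (List ℕ × ℕ)) : Prop :=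
  (∀ p ∈ L, (p.1 ++ [p.2]).Pairwise (· > ·)) ∧ L.Pairwise fun p q => p.2 ≤ q.2

theorem columnsWord_cons (p : List ℕ × ℕ) (L : List (List ℕ × ℕ)) :
    columnsWord (p :: L) = p.1 ++ [p.2] ++ columnsWord L := by
  simp [columnsWord]

theorem IsColumns.cons {p : List ℕ × ℕ} {L : List (List ℕ × ℕ)}
    (hp : (p.1 ++ [p.2]).Pairwise (· > ·)) (hpL : ∀ q ∈ L, p.2 ≤ q.2) (hL : IsColumns L) :
    IsColumns (p :: L) :=
  ⟨List.forall_mem_cons.2 ⟨hp, hL.1⟩, List.pairwise_cons.2 ⟨hpL, hL.2⟩⟩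

theorem exists_insert_columns (x : ℕ) {L : List (List ℕ × ℕ)} (hL : IsColumns L) :
    ∃ L', IsColumns L' ∧ KEquiv (x :: columnsWord L) (columnsWord L') ∧
      ∀ b ≤ x, (∀ p ∈ L, b ≤ p.2) → ∀ p ∈ L', b ≤ p.2 := by
  induction L generalizing x with
  | nil => exact ⟨[([], x)], by simp [IsColumns], KEquiv.refl _, by simp⟩
  | cons p L ih =>
    obtain ⟨d, m⟩ := p
    have hL' : IsColumns L := ⟨fun q hq => hL.1 q (by simp [hq]), (List.pairwise_cons.1 hL.2).2⟩
    have hc : (d ++ [m]).Pairwise (· > ·) := hL.1 (d, m) (by simp)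
    have hm : ∀ q ∈ L, m ≤ q.2 := (List.pairwise_cons.1 hL.2).1
    by_cases hxm : x ≤ m
    · obtain ⟨L', hcol, heq, hb⟩ := ih m hL'
      refine ⟨(d, x) :: L', hcol.cons (pairwise_gt_replace hxm hc (by simp))
        (hb x hxm fun q hq => hxm.trans (hm q hq)), ?_, ?_⟩
      · have h₁ := (kEquiv_move_right hxm d hc).append_right (columnsWord L)
        have h₂ := heq.append_left (d ++ [x])
        simp only [columnsWord_cons, List.append_assoc, List.cons_append, List.nil_append] at *
        exact h₁.trans h₂
      · intro b hbx hbL q hq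
        rcases List.mem_cons.1 hq with rfl | hq
        · exact hbx
        · exact hb b (by omega) (fun q hq => hbL q (by simp [hq])) q hq
    · rcases exists_bump x (List.pairwise_append.1 hc).1 with hlt | ⟨d₁, y, e, rfl, hxy, he⟩
      · refine ⟨(x :: d, m) :: L, hL'.cons (List.pairwise_cons.2 ⟨?_, hc⟩) hm, ?_, ?_⟩
        · exact List.forall_mem_append.2 ⟨hlt, by simpa using hxm⟩
        · simpa [columnsWord_cons] using KEquiv.refl _
        · intro b hbx hbL
          rw [List.forall_mem_cons] at hbL ⊢
          exact hbL
      · obtain ⟨L', hcol, heq, hb⟩ := ih y hL'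
        have hem : ∀ z ∈ e ++ [m], z < x :=
          List.forall_mem_append.2 ⟨he, by simpa using hxm⟩
        rw [List.append_assoc, List.cons_append] at hc
        refine ⟨(d₁ ++ x :: e, m) :: L', hcol.cons
          (by simpa using pairwise_gt_replace hxy hc hem) (hb m (by omega) hm), ?_, ?_⟩
        · have h₁ := (kEquiv_bump hxy hc hem).append_right (columnsWord L)
          have h₂ := heq.append_left (d₁ ++ x :: e ++ [m])
          simp only [columnsWord_cons, List.append_assoc, List.cons_append, List.nil_append] at *
          exact h₁.trans h₂
        · intro b hbx hbL q hq
          rcases List.mem_cons.1 hq with rfl | hq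
          · exact hbL (d₁ ++ y :: e, m) (by simp)
          · exact hb b (by omega) (fun q hq => hbL q (by simp [hq])) q hq

theorem exists_columns (w : List ℕ) : ∃ L, IsColumns L ∧ KEquiv w (columnsWord L) := by
  induction w with
  | nil => exact ⟨[], by simp [IsColumns], KEquiv.refl _⟩
  | cons x w ih =>
    obtain ⟨L, hL, heq⟩ := ih
    obtain ⟨L', hL', heq', -⟩ := exists_insert_columns x hL
    exact ⟨L', hL', (heq.append_left [x]).trans heq'⟩

theorem last_letters_sublist (L : List (List ℕ × ℕ)) :
    (L.map Prod.snd).Sublist (columnsWord L) := by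
  induction L with
  | nil => simp
  | cons p L ih =>
    rw [columnsWord_cons, List.map_cons]
    exact (List.sublist_append_right p.1 [p.2]).append ih

theorem count_column_le {c : List ℕ} (hc : c.Pairwise (· > ·)) (a : ℕ) : c.count a ≤ 1 :=
  List.nodup_iff_count_le_one.1 (hc.imp fun h => ne_of_gt h) a

theorem count_columnsWord_le (a : ℕ) {L : List (List ℕ × ℕ)}
    (hL : ∀ p ∈ L, (p.1 ++ [p.2]).Pairwise (· > ·)) :
    (columnsWord L).count a ≤ L.length := by
  induction L with
  | nil => simp [columnsWord]
  | cons p L ih =>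
    have h₁ := ih fun q hq => hL q (by simp [hq])
    have h₂ := count_column_le (hL p (by simp)) a
    rw [columnsWord_cons, List.count_append, List.length_cons]
    omega

theorem kEquiv_column_comm {a : ℕ} {c : List ℕ} (hc : c.Pairwise (· > ·)) (ha : a ∈ c) :
    KEquiv (a :: c) (c ++ [a]) := by
  obtain ⟨d, e, rfl⟩ := List.append_of_mem ha
  exact kEquiv_bump le_rfl hc (List.pairwise_cons.1 (List.pairwise_append.1 hc).2.1).1

/-- A product of strictly decreasing words commutes with `a` once it has as many factors as
occurrences of `a`. -/
theorem kEquiv_columnsWord_comm {a : ℕ} {L : List (List ℕ × ℕ)}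
    (hL : ∀ p ∈ L, (p.1 ++ [p.2]).Pairwise (· > ·))
    (hcount : L.length ≤ (columnsWord L).count a) :
    KEquiv (a :: columnsWord L) (columnsWord L ++ [a]) := by
  induction L with
  | nil => exact KEquiv.refl _
  | cons p L ih =>
    have hL' : ∀ q ∈ L, (q.1 ++ [q.2]).Pairwise (· > ·) := fun q hq => hL q (by simp [hq])
    have hp := hL p (by simp)
    have h₁ := count_columnsWord_le a hL'
    have h₂ := count_column_le hp a
    rw [columnsWord_cons, List.count_append, List.length_cons] at hcount
    have hpos : 0 < (p.1 ++ [p.2]).count a := by omega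
    have h₃ := (kEquiv_column_comm hp (List.count_pos_iff.1 hpos)).append_right (columnsWord L)
    have h₄ := (ih hL' (by omega)).append_left (p.1 ++ [p.2])
    simp only [columnsWord_cons, List.append_assoc, List.cons_append, List.nil_append] at *
    exact h₃.trans h₄

theorem mem_cent_congr {u w w' : List ℕ} (h : KEquiv w w') : w ∈ Cent u ↔ w' ∈ Cent u :=
  ⟨fun hw => ((h.symm.append_left u).trans hw).trans (h.append_right u),
    fun hw => ((h.append_left u).trans hw).trans (h.symm.append_right u)⟩

theorem cent_singleton_subset (a k : ℕ) : Cent [a] ⊆ Cent (List.replicate k a) := by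
  intro w hw
  induction k with
  | zero => simpa [Cent] using KEquiv.refl w
  | succ k ih =>
    have h₁ := KEquiv.append_left ih [a]
    have h₂ := KEquiv.append_right hw (List.replicate k a)
    simp only [Cent, Set.mem_ofPred_eq, List.replicate_succ, List.append_assoc, List.cons_append,
      List.nil_append] at *
    exact h₁.trans h₂

theorem cent_replicate_subset (a : ℕ) {k : ℕ} (hk : 0 < k) :
    Cent (List.replicate k a) ⊆ Cent [a] := by
  intro w hw
  obtain ⟨L, hL, heq⟩ := exists_columns w
  rw [mem_cent_congr heq] at hw ⊢
  refine kEquiv_columnsWord_comm hL.1 ?_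
  have := length_le_count (length_le_count_of_ge hk hw) (length_le_count_of_le hk hw)
    (last_letters_sublist L) (List.pairwise_map.2 hL.2)
  rwa [List.length_map] at this

end Plactic

open Plactic in
theorem stmt_12 (a k : ℕ) (ha : 0 < a) (hk : 0 < k) :
    Cent (List.replicate k a) = Cent [a] := by
  exact (cent_replicate_subset a hk).antisymm (cent_singleton_subset a k)
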